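/- With A, r, γ, w as defined in the context, the matrix w ∈ M_n(ℂ) satisfies: w is unitary, w^j = 1, w·x = x·w for every x ∈ A (so Ad w acts trivially on A), and w·r = γ·(r·w) (equivalently, Ad w(r) = w r w* = γ r). -/

import Mathlib

open Matrix

noncomputable section

/-- The index set `{1, …, n}` partitioned into consecutive blocks
`I_1, …, I_j` of sizes `a 0, …, a (j−1)`. -/
abbrev BIdx (j : ℕ) (a : Fin j → ℕ) : Type := Σ i : Fin j, Fin (a i)

/-- The set of block-diagonal matrices, `A ≅ ⊕_{i=1}^j M_{a_i}(ℂ)`. -/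
def blockDiagSet (j : ℕ) (a : Fin j → ℕ) : Set (Matrix (BIdx j a) (BIdx j a) ℂ) :=
  {x | ∀ t t' : BIdx j a, t.1 ≠ t'.1 → x t t' = 0}

/-- `c_i`, the last index of block `I_i`. -/
def lastIdx (j : ℕ) (a : Fin j → ℕ) (ha : ∀ i, 0 < a i) (i : Fin j) : BIdx j a :=
  ⟨i, ⟨a i - 1, Nat.sub_lt (ha i) Nat.one_pos⟩⟩

/-- The cyclic successor on block labels. -/
def nextIdx (j : ℕ) (hj : 0 < j) (i : Fin j) : Fin j :=
  ⟨((i : ℕ) + 1) % j, Nat.mod_lt _ hj⟩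

/-- The permutation `σ` with `σ(c_i) = c_{i+1}` (cyclically) and `σ(t) = t`
for all other `t`. -/
def sigmaPerm (j : ℕ) (a : Fin j → ℕ) (hj : 0 < j) (ha : ∀ i, 0 < a i)
    (t : BIdx j a) : BIdx j a :=
  if t = lastIdx j a ha t.1 then lastIdx j a ha (nextIdx j hj t.1) else t

/-- The permutation matrix `v` of `σ`: `v_{σ(t), t} = 1`. -/
def vMat (j : ℕ) (a : Fin j → ℕ) (hj : 0 < j) (ha : ∀ i, 0 < a i) :
    Matrix (BIdx j a) (BIdx j a) ℂ :=
  Matrix.of fun t' t : BIdx j a => if t' = sigmaPerm j a hj ha t then (1 : ℂ) else 0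

/-- The diagonal projection `s` onto the positions `c_1, …, c_j`. -/
def sMat (j : ℕ) (a : Fin j → ℕ) (ha : ∀ i, 0 < a i) :
    Matrix (BIdx j a) (BIdx j a) ℂ :=
  Matrix.diagonal fun t : BIdx j a => if t = lastIdx j a ha t.1 then (1 : ℂ) else 0

/-- `r = s v s`. -/
def rMat (j : ℕ) (a : Fin j → ℕ) (hj : 0 < j) (ha : ∀ i, 0 < a i) :
    Matrix (BIdx j a) (BIdx j a) ℂ :=
  sMat j a ha * vMat j a hj ha * sMat j a ha

/-- The central unitary `w = Σ_i γ^{i−1} 1_i`. -/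
def wMat (j : ℕ) (a : Fin j → ℕ) (γ : ℂ) : Matrix (BIdx j a) (BIdx j a) ℂ :=
  Matrix.diagonal fun t : BIdx j a => γ ^ (t.1 : ℕ)

/-- The diagonal projection `1_i` onto block `I_i`. -/
def oneBlock (j : ℕ) (a : Fin j → ℕ) (i : Fin j) : Matrix (BIdx j a) (BIdx j a) ℂ :=
  Matrix.diagonal fun t : BIdx j a => if t.1 = i then (1 : ℂ) else 0

/-- `p_i`: supported on block `I_i`, there equal to
`diag(1, γ_i, …, γ_i^{a_i−1})` with `γ_i = exp(2π i / a_i)`, and `0` outside. -/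
def pBlock (j : ℕ) (a : Fin j → ℕ) (i : Fin j) : Matrix (BIdx j a) (BIdx j a) ℂ :=
  Matrix.diagonal fun t : BIdx j a =>
    if t.1 = i then Complex.exp (2 * Real.pi * Complex.I / (a i : ℂ)) ^ (t.2 : ℕ) else 0

/-- `q_i`: supported on block `I_i`, there equal to the cyclic permutation
matrix (mod `a_i`), and `0` outside. -/
def qBlock (j : ℕ) (a : Fin j → ℕ) (i : Fin j) : Matrix (BIdx j a) (BIdx j a) ℂ :=
  Matrix.of fun t' t : BIdx j a =>
    if t'.1 = i ∧ t.1 = i ∧ (t'.2 : ℕ) = ((t.2 : ℕ) + 1) % a i then (1 : ℂ) else 0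

/-!
Conjugation by `w` scales the matrix unit `E_{t,t'}` with `t ∈ I_i`, `t' ∈ I_k` by `γ^{i-k}`.
The entries of a block-diagonal matrix are supported on `i = k`, where this factor is `1`; those of
`r` are supported on the positions `(c_{k+1}, c_k)`, where it is `γ`, also when the cycle wraps
around, because `γ^j = 1`.
-/

section Unitary

theorem mul_mul_star_eq_smul_of_mem_unitary {R S : Type*} [Monoid S] [StarMul S] [SMul R S]
    [IsScalarTower R S S] {u x : S} {c : R} (hu : u ∈ unitary S) (h : u * x = c • (x * u)) :
    u * x * star u = c • x := by
  rw [h, smul_mul_assoc, mul_assoc, Unitary.mul_star_self_of_mem hu, mul_one]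

theorem mem_unitary_of_isOfFinOrder {𝕜 : Type*} [RCLike 𝕜] {z : 𝕜} (hz : IsOfFinOrder z) :
    z ∈ unitary 𝕜 := by
  have mul_star_z : z * star z = 1 := by
    rw [RCLike.star_def, RCLike.mul_conj, hz.norm_eq_one, RCLike.ofReal_one, one_pow]
  exact Unitary.mem_iff.mpr ⟨mul_comm z (star z) ▸ mul_star_z, mul_star_z⟩

end Unitary

section Diagonal

variable {m n α : Type*} [Fintype n] [DecidableEq n]

theorem diagonal_mem_unitary [Semiring α] [StarRing α] {d : n → α} (hd : ∀ i, d i ∈ unitary α) :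
    diagonal d ∈ unitary (Matrix n n α) := by
  simp only [Unitary.mem_iff, star_eq_conjTranspose, diagonal_conjTranspose, diagonal_mul_diagonal,
    Pi.star_apply, Unitary.star_mul_self_of_mem (hd _), Unitary.mul_star_self_of_mem (hd _),
    diagonal_one, and_self]

theorem diagonal_mul_eq_smul_mul_diagonal [Fintype m] [DecidableEq m] [CommSemiring α]
    {d : m → α} {e : n → α} {c : α} {x : Matrix m n α}
    (h : ∀ i k, x i k ≠ 0 → d i = c * e k) :
    diagonal d * x = c • (x * diagonal e) := by
  ext i k
  rw [diagonal_mul, Matrix.smul_apply, mul_diagonal, smul_eq_mul]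
  by_cases hx : x i k = 0
  · simp only [hx, mul_zero, zero_mul]
  · rw [h i k hx, mul_assoc, mul_comm (e k)]

end Diagonal

theorem pow_nextIdx {M : Type*} [Monoid M] {γ : M} {j : ℕ} (hj : 0 < j) (hγ : γ ^ j = 1)
    (i : Fin j) : γ ^ (nextIdx j hj i : ℕ) = γ * γ ^ (i : ℕ) := by
  rw [nextIdx, ← pow_eq_pow_mod _ hγ, pow_succ']

section Blocks

variable {j : ℕ} {a : Fin j → ℕ} {γ : ℂ}

theorem sigmaPerm_lastIdx (hj : 0 < j) (ha : ∀ i, 0 < a i) (i : Fin j) :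
    sigmaPerm j a hj ha (lastIdx j a ha i) = lastIdx j a ha (nextIdx j hj i) :=
  if_pos rfl

theorem eq_lastIdx_of_rMat_apply_ne_zero {hj : 0 < j} {ha : ∀ i, 0 < a i} {t t' : BIdx j a}
    (h : rMat j a hj ha t t' ≠ 0) :
    t = lastIdx j a ha (nextIdx j hj t'.1) := by
  rw [rMat, sMat, mul_diagonal, diagonal_mul] at h
  have ht' : t' = lastIdx j a ha t'.1 := (ite_ne_right_iff.mp (right_ne_zero_of_mul h)).1
  have ht : t = sigmaPerm j a hj ha t' :=
    (ite_ne_right_iff.mp (right_ne_zero_of_mul (left_ne_zero_of_mul h))).1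
  rw [ht, ht', sigmaPerm_lastIdx]
  rfl

theorem wMat_mem_unitary (hγ : γ ∈ unitary ℂ) :
    wMat j a γ ∈ unitary (Matrix (BIdx j a) (BIdx j a) ℂ) :=
  diagonal_mem_unitary fun t => pow_mem hγ (t.1 : ℕ)

theorem wMat_pow_eq_one {k : ℕ} (hγ : γ ^ k = 1) : wMat j a γ ^ k = 1 := by
  rw [wMat, diagonal_pow, ← diagonal_one]
  congr 1
  funext t
  rw [Pi.pow_apply, pow_right_comm, hγ, one_pow]

theorem wMat_commute_of_mem_blockDiagSet {x : Matrix (BIdx j a) (BIdx j a) ℂ}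
    (hx : x ∈ blockDiagSet j a) : Commute (wMat j a γ) x := by
  have same_block {t t' : BIdx j a} (h : x t t' ≠ 0) : t.1 = t'.1 :=
    not_imp_comm.mp (hx t t') h
  have hw : wMat j a γ * x = (1 : ℂ) • (x * wMat j a γ) :=
    diagonal_mul_eq_smul_mul_diagonal fun t t' h => by rw [same_block h, one_mul]
  rwa [one_smul] at hw

theorem wMat_mul_rMat (hj : 0 < j) (ha : ∀ i, 0 < a i) (hγ : γ ^ j = 1) :
    wMat j a γ * rMat j a hj ha = γ • (rMat j a hj ha * wMat j a γ) := by
  refine diagonal_mul_eq_smul_mul_diagonal fun t t' h => ?_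
  have next_block : t.1 = nextIdx j hj t'.1 :=
    congrArg Sigma.fst (eq_lastIdx_of_rMat_apply_ne_zero h)
  rw [next_block, pow_nextIdx hj hγ]

end Blocks

theorem statement8_general (j : ℕ) (hj : 0 < j) (a : Fin j → ℕ) (ha : ∀ i, 0 < a i)
    (γ : ℂ) (hγ : γ ^ j = 1) :
    (wMat j a γ * (wMat j a γ).conjTranspose = 1 ∧
      (wMat j a γ).conjTranspose * wMat j a γ = 1) ∧
    wMat j a γ ^ j = 1 ∧
    (∀ x ∈ blockDiagSet j a, wMat j a γ * x = x * wMat j a γ) ∧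
    wMat j a γ * rMat j a hj ha = γ • (rMat j a hj ha * wMat j a γ) ∧
    wMat j a γ * rMat j a hj ha * (wMat j a γ).conjTranspose = γ • rMat j a hj ha := by
  have γ_unitary : γ ∈ unitary ℂ :=
    mem_unitary_of_isOfFinOrder (isOfFinOrder_iff_pow_eq_one.mpr ⟨j, hj, hγ⟩)
  have w_unitary : wMat j a γ ∈ unitary (Matrix (BIdx j a) (BIdx j a) ℂ) :=
    wMat_mem_unitary γ_unitary
  have w_mul_r := wMat_mul_rMat hj ha hγ
  exact ⟨⟨Unitary.mul_star_self_of_mem w_unitary, Unitary.star_mul_self_of_mem w_unitary⟩,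
    wMat_pow_eq_one hγ,
    fun _ hx => wMat_commute_of_mem_blockDiagSet hx,
    w_mul_r,
    mul_mul_star_eq_smul_of_mem_unitary w_unitary w_mul_r⟩

/-- The 'two simple yet important observations' of Section 3: `w` is unitary,
`w^j = 1`, `Ad w` acts trivially on `A`, and `Ad w (r) = γ r`. -/
theorem statement8 (j : ℕ) (hj : 0 < j) (a : Fin j → ℕ) (ha : ∀ i, 0 < a i)
    (γ : ℂ) (hγ : γ = Complex.exp (2 * Real.pi * Complex.I / (j : ℂ))) :
    (wMat j a γ * (wMat j a γ).conjTranspose = 1 ∧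
      (wMat j a γ).conjTranspose * wMat j a γ = 1) ∧
    wMat j a γ ^ j = 1 ∧
    (∀ x ∈ blockDiagSet j a, wMat j a γ * x = x * wMat j a γ) ∧
    wMat j a γ * rMat j a hj ha = γ • (rMat j a hj ha * wMat j a γ) ∧
    wMat j a γ * rMat j a hj ha * (wMat j a γ).conjTranspose = γ • rMat j a hj ha :=
  statement8_general j hj a ha γ (hγ ▸ (Complex.isPrimitiveRoot_exp j hj.ne').pow_eq_one)
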